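/- arXiv:2106.15741 — 4 statements merged into one kernel-verified Lean document; each statement's English description precedes it below -/
import Mathlib

section
/- For every ε > 0 there exists δ > 0 with the following property: for every unital C*-algebra B and all projections p, q ∈ B with ‖q − q·p‖ < δ, there is a partial isometry w ∈ B such that w·w* = q, w*·w ≤ p, and ‖w − q‖ < ε. -/
/-!
Put `x = q * p`, so that `q * x = x` and `x * star x` is close to `q`. Then
`a = 1 - q + x * star x` is positive, commutes with `q`, satisfies `a * q = x * star x` and is
close to `1`, hence invertible. The partial isometry is `w = (√a)⁻¹ * x`. It is close to `x`
because `w - x = (1 - √a) * w`, where `‖w‖ ≤ 1` and `‖1 - √a‖ ≤ ‖1 - a‖ = ‖q - x * star x‖`.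
-/

theorem abs_one_sub_sqrt_le {x : ℝ} (hx : 0 ≤ x) : |1 - √x| ≤ |1 - x| := by
  have factorization : 1 - x = (1 - √x) * (1 + √x) := by
    linear_combination Real.mul_self_sqrt hx
  rw [factorization, abs_mul]
  refine le_mul_of_one_le_right (abs_nonneg _) ?_
  rw [abs_of_nonneg (by positivity)]
  exact le_add_of_nonneg_right (Real.sqrt_nonneg x)

theorem norm_one_sub_sqrt_le {A : Type*} [CStarAlgebra A] [PartialOrder A] [StarOrderedRing A]
    {a : A} (ha : 0 ≤ a) : ‖1 - CFC.sqrt a‖ ≤ ‖1 - a‖ := by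
  nontriviality A
  have sqrt_eq : 1 - CFC.sqrt a = cfc (fun t : ℝ ↦ 1 - √t) a := by
    rw [cfc_sub .., cfc_const_one ℝ a, CFC.sqrt_eq_real_sqrt a, cfcₙ_eq_cfc]
  rw [sqrt_eq]
  refine norm_cfc_le (norm_nonneg _) fun t ht ↦ ?_
  have one_sub_mem : 1 - t ∈ spectrum ℝ (1 - a) := by
    rw [← map_one (algebraMap ℝ A), ← spectrum.singleton_sub_eq]
    exact Set.sub_mem_sub rfl ht
  exact (abs_one_sub_sqrt_le (spectrum_nonneg_of_nonneg ha ht)).trans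
    (spectrum.norm_le_norm_of_mem one_sub_mem)

theorem inv_mul_mul_star_inv_mul_eq {M : Type*} [Monoid M] [StarMul M] {s : Mˣ} {q x : M}
    (hs : IsSelfAdjoint (s : M)) (hsq : Commute (s : M) q) (hx : s * s * q = x * star x) :
    (↑s⁻¹ * x) * star (↑s⁻¹ * x) = q := by
  have star_inv : star (↑s⁻¹ : M) = ↑s⁻¹ := by
    rw [← Units.coe_star_inv, show star s = s from Units.ext hs]
  calc (↑s⁻¹ * x) * star (↑s⁻¹ * x) = ↑s⁻¹ * (x * star x) * ↑s⁻¹ := by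
        simp only [star_mul, star_inv, mul_assoc]
    _ = s * q * ↑s⁻¹ := by rw [← hx, mul_assoc (s : M), Units.inv_mul_cancel_left]
    _ = q := by rw [hsq.eq, Units.mul_inv_cancel_right]

section CStarRing

variable {E : Type*} [NonUnitalNormedRing E] [StarRing E] [CStarRing E] {q : E}

theorem norm_le_one_of_isStarProjection_mul_star_self {w : E}
    (hw : IsStarProjection (w * star w)) : ‖w‖ ≤ 1 := by
  have := hw.norm_le
  rw [CStarRing.norm_self_mul_star, ← sq] at this
  exact (sq_le_one_iff₀ (norm_nonneg w)).mp this

theorem norm_sub_mul_star_self_le (hq : IsStarProjection q) (x : E) :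
    ‖q - x * star x‖ ≤ 2 * ‖q - x‖ + ‖q - x‖ ^ 2 := by
  set e := q - x with he
  have expansion : q - x * star x = e * q + q * star e - e * star e := by
    simp only [he, star_sub, hq.isSelfAdjoint.star_eq, sub_mul, mul_sub,
      hq.isIdempotentElem.eq]
    abel
  have left_le : ‖e * q‖ ≤ ‖e‖ :=
    (norm_mul_le e q).trans (mul_le_of_le_one_right (norm_nonneg e) hq.norm_le)
  have right_le : ‖q * star e‖ ≤ ‖e‖ := by
    rw [← norm_star e]
    exact (norm_mul_le q (star e)).trans (mul_le_of_le_one_left (norm_nonneg _) hq.norm_le)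
  calc ‖q - x * star x‖ ≤ ‖e * q‖ + ‖q * star e‖ + ‖e * star e‖ := by
        rw [expansion]
        exact (norm_sub_le _ _).trans (add_le_add_left (norm_add_le _ _) _)
    _ ≤ 2 * ‖e‖ + ‖e‖ ^ 2 := by
        rw [CStarRing.norm_self_mul_star]
        linarith

end CStarRing

section CStarAlgebra

variable {B : Type*} [CStarAlgebra B] {q x : B}

theorem exists_mul_mul_star_eq_of_norm_sub_mul_star_lt_one (hq : IsStarProjection q)
    (hqx : q * x = x) (hx : ‖q - x * star x‖ < 1) :
    ∃ b : B, (b * x) * star (b * x) = q ∧ ‖b * x - x‖ ≤ ‖q - x * star x‖ := by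
  let := CStarAlgebra.spectralOrder B
  have := CStarAlgebra.spectralOrderedRing B
  set a := 1 - q + x * star x with ha
  have one_sub_a : 1 - a = q - x * star x := by rw [ha]; abel
  have a_nonneg : 0 ≤ a := add_nonneg hq.one_sub_nonneg (mul_star_self_nonneg x)
  have a_isUnit : IsUnit a := by
    rw [← sub_sub_cancel 1 a, one_sub_a]
    exact isUnit_one_sub_of_norm_lt_one hx
  have star_x_mul_q : star x * q = star x := by
    simpa only [star_mul, hq.isSelfAdjoint.star_eq] using congrArg star hqx
  have a_mul_q : a * q = x * star x := by
    rw [ha, add_mul, hq.one_sub_mul_self, zero_add, mul_assoc, star_x_mul_q]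
  have q_mul_a : q * a = x * star x := by
    rw [ha, mul_add, hq.mul_one_sub_self, zero_add, ← mul_assoc, hqx]
  have sqrt_commute : Commute (CFC.sqrt a) q :=
    Commute.cfcₙ_nnreal (a_mul_q.trans q_mul_a.symm) _
  obtain ⟨s, hs⟩ := (CFC.isUnit_sqrt_iff a).mpr a_isUnit
  have mul_star_eq : (↑s⁻¹ * x) * star (↑s⁻¹ * x) = q := by
    apply inv_mul_mul_star_inv_mul_eq
    · exact hs ▸ (CFC.sqrt_nonneg a).isSelfAdjoint
    · exact hs ▸ sqrt_commute
    · rw [hs, CFC.sqrt_mul_sqrt_self a, a_mul_q]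
  refine ⟨↑s⁻¹, mul_star_eq, ?_⟩
  calc ‖↑s⁻¹ * x - x‖ = ‖(1 - CFC.sqrt a) * (↑s⁻¹ * x)‖ := by
        rw [sub_mul, one_mul, ← hs, Units.mul_inv_cancel_left]
    _ ≤ ‖1 - CFC.sqrt a‖ * 1 := norm_mul_le_of_le le_rfl <|
        norm_le_one_of_isStarProjection_mul_star_self (mul_star_eq.symm ▸ hq)
    _ ≤ ‖q - x * star x‖ := by
        rw [mul_one, ← one_sub_a]
        exact norm_one_sub_sqrt_le a_nonneg

theorem exists_mul_mul_star_eq_of_norm_sub_le (hq : IsStarProjection q) (hqx : q * x = x)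
    (hx : ‖q - x‖ ≤ 1 / 4) :
    ∃ b : B, (b * x) * star (b * x) = q ∧ ‖b * x - q‖ ≤ 4 * ‖q - x‖ := by
  have defect_le := norm_sub_mul_star_self_le hq x
  have sq_le : ‖q - x‖ ^ 2 ≤ 1 / 4 * ‖q - x‖ := by
    rw [sq]
    exact mul_le_mul_of_nonneg_right hx (norm_nonneg _)
  obtain ⟨b, hb, hbx⟩ := exists_mul_mul_star_eq_of_norm_sub_mul_star_lt_one hq hqx (by linarith)
  refine ⟨b, hb, ?_⟩
  calc ‖b * x - q‖ ≤ ‖b * x - x‖ + ‖q - x‖ := by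
        rw [norm_sub_rev q x]
        exact norm_sub_le_norm_sub_add_norm_sub _ _ _
    _ ≤ 4 * ‖q - x‖ := by linarith [norm_nonneg (q - x)]

end CStarAlgebra

theorem stmt9_general :
    ∀ ε : ℝ, 0 < ε → ∃ δ : ℝ, 0 < δ ∧
      ∀ (B : Type*) [CStarAlgebra B] (p q : B), IsIdempotentElem p → IsStarProjection q →
        ‖q - q * p‖ < δ →
        ∃ w : B, w * star w = q ∧ (star w * w) * p = star w * w ∧ ‖w - q‖ < ε := by
  intro ε hε
  refine ⟨min (1 / 4) (ε / 4), by positivity, fun B _ p q hp hq hpq ↦ ?_⟩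
  obtain ⟨hpq_quarter, hpq_ε⟩ := lt_min_iff.mp hpq
  have q_mul : q * (q * p) = q * p := by rw [← mul_assoc, hq.isIdempotentElem.eq]
  obtain ⟨b, hb, hbq⟩ := exists_mul_mul_star_eq_of_norm_sub_le hq q_mul hpq_quarter.le
  refine ⟨b * (q * p), hb, ?_, by linarith⟩
  simp only [mul_assoc, hp.eq]

/-- For every ε > 0 there is δ > 0 such that in any unital C*-algebra, a projection `q`
with `‖q − q·p‖ < δ` (for a projection `p`) admits a partial isometry `w` with
`w·w* = q`, `w*·w ≤ p` and `‖w − q‖ < ε`. The condition `w*·w ≤ p` for projections is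
expressed by the equivalent algebraic identity `(w*·w)·p = w*·w`. -/
theorem stmt9 :
    ∀ ε : ℝ, 0 < ε → ∃ δ : ℝ, 0 < δ ∧
      ∀ (B : Type*) [NormedRing B] [StarRing B] [CStarRing B]
        [NormedAlgebra ℂ B] [StarModule ℂ B] [CompleteSpace B],
        ∀ p q : B, IsSelfAdjoint p → p * p = p → IsSelfAdjoint q → q * q = q →
          ‖q - q * p‖ < δ →
          ∃ w : B, w * star w = q ∧ (star w * w) * p = star w * w ∧ ‖w - q‖ < ε := by
  intro ε hε
  obtain ⟨δ, hδ, exists_w⟩ := stmt9_general ε hε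
  refine ⟨δ, hδ, fun B _ _ _ _ _ _ p q _ hp hq hqq ↦ ?_⟩
  let : CStarAlgebra B := { }
  exact exists_w B p q hp ⟨hqq, hq⟩
end

section
/- There exists δ with 0 < δ < 1/2 satisfying the following: let H be a separable complex Hilbert space, let N ⊆ M be infinite factors acting on H, let p be a nonzero projection in the commutant N′ of N, and let u be a unitary operator on H such that p̃ := u p u* belongs to M and ‖u − 1‖ < δ. Then p̃ is Murray–von Neumann equivalent to the identity 1 in M. -/
variable {H : Type*} [NormedAddCommGroup H] [InnerProductSpace ℂ H] [CompleteSpace H]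

/-- `p` is a projection (an orthogonal projection operator). -/
def IsProjectionOp (p : H →L[ℂ] H) : Prop := IsSelfAdjoint p ∧ p * p = p

/-- Murray–von Neumann equivalence of `p` and `q` in the von Neumann algebra `M`. -/
def MvNEquiv (M : VonNeumannAlgebra H) (p q : H →L[ℂ] H) : Prop :=
  ∃ v : H →L[ℂ] H, v ∈ M ∧ star v * v = p ∧ v * star v = q

/-- `p` is an infinite projection in `M`: it is Murray–von Neumann equivalent in `M`
to a projection `q ∈ M` with `q ≤ p` (i.e. `q·p = q`) and `q ≠ p`. -/
def InfiniteProj (M : VonNeumannAlgebra H) (p : H →L[ℂ] H) : Prop :=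
  ∃ q : H →L[ℂ] H, q ∈ M ∧ IsProjectionOp q ∧ q * p = q ∧ q ≠ p ∧ MvNEquiv M p q

/-- `M` is a factor: its center consists of scalar multiples of the identity. -/
def IsFactor (M : VonNeumannAlgebra H) : Prop :=
  ∀ x : H →L[ℂ] H, x ∈ M → x ∈ M.commutant → ∃ c : ℂ, x = c • (1 : H →L[ℂ] H)

/-- `M` is an infinite factor: a factor in which `1` is an infinite projection. -/
def InfiniteFactor (M : VonNeumannAlgebra H) : Prop :=
  IsFactor M ∧ InfiniteProj M 1

/-! An isometry `v ∈ N` with `v v* ≠ 1` commutes with `p`, so `B = p v p + (1 - p)` is an isometry.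
It is proper, because in a factor `N` a nonzero element of `N` times a nonzero element of `N′` is
nonzero. With `q = u p u*`, the element `A = q v q + (1 - q)` of `M` is close to `B`, hence bounded
below but not invertible. The isometry in the polar decomposition of `A` lies in `M`, commutes with
`q` and is onto over `1 - q`, hence proper over `q`: so `q` is infinite in `M`.

In a factor on a separable space, an infinite projection `q` is equivalent to `1`: a partial
isometry `w` with `w* w = q` and `w w* < q` gives orthogonal copies `wⁿ e` under `q` of the
projection `e = q - w w*`, and countably many elements `aₙ` of `M` make `(e aₙ)` jointly injective.
A weighted sum of the `wⁿ e aₙ` is then injective with range under `q`; its polar part is an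
isometry under `q`, and Cantor–Bernstein concludes. -/

section CStarRing

variable {A : Type*} [NormedRing A] [StarRing A] [CStarRing A]

theorem mul_star_mul_self_of_isStarProjection {w : A} (hw : IsStarProjection (star w * w)) :
    w * (star w * w) = w := by
  have h : star (w - w * (star w * w)) * (w - w * (star w * w)) = 0 := by
    have hid : star w * w * (star w * w) = star w * w := hw.isIdempotentElem
    calc star (w - w * (star w * w)) * (w - w * (star w * w))
        = star w * w - star w * w * (star w * w)
          - (star w * w * (star w * w) - star w * w * (star w * w) * (star w * w)) := by
          simp only [star_sub, star_mul, star_star]; noncomm_ring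
      _ = 0 := by simp only [hid, sub_self]
  exact (sub_eq_zero.1 (CStarRing.star_mul_self_eq_zero_iff _ |>.1 h)).symm

theorem isStarProjection_mul_star_self {w : A} (hw : IsStarProjection (star w * w)) :
    IsStarProjection (w * star w) where
  isIdempotentElem := by
    rw [IsIdempotentElem, ← mul_assoc, mul_assoc w, mul_star_mul_self_of_isStarProjection hw]
  isSelfAdjoint := .mul_star_self w

theorem norm_le_one_of_star_mul_self_eq_one {v : A} (hv : star v * v = 1) : ‖v‖ ≤ 1 := by
  have h : ‖v‖ * ‖v‖ ≤ 1 := by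
    rw [← CStarRing.norm_star_mul_self, hv]
    exact IsStarProjection.norm_le 1 (.one A)
  nlinarith

theorem isUnit_star_mul_of_norm_sub_lt_one [CompleteSpace A] {a b : A} (hb : star b * b = 1)
    (hab : ‖b - a‖ < 1) : IsUnit (star b * a) := by
  have h : ‖star b * (b - a)‖ < 1 := by
    refine (norm_mul_le _ _).trans_lt ((mul_le_of_le_one_left (norm_nonneg _) ?_).trans_lt hab)
    simpa only [norm_star] using norm_le_one_of_star_mul_self_eq_one hb
  simpa only [mul_sub, hb, sub_sub_cancel] using isUnit_one_sub_of_norm_lt_one h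

theorem mul_star_self_eq_one_of_norm_sub_lt_one [CompleteSpace A] {a b : A} (hb : star b * b = 1)
    (hab : ‖b - a‖ < 1) (ha : IsUnit a) : b * star b = 1 :=
  (ha.mul_right_iff.1 (isUnit_star_mul_of_norm_sub_lt_one hb hab)).isRegular.left.mul_eq_one_symm hb

theorem norm_sub_conj_le {u : A} (hu : u ∈ unitary A) (x : A) :
    ‖x - u * x * star u‖ ≤ 2 * ‖u - 1‖ * ‖x‖ := by
  calc ‖x - u * x * star u‖ = ‖(x * (u - 1) - (u - 1) * x) * star u‖ := by
        congr 1
        have hxu : x * u * star u = x := by rw [mul_assoc, Unitary.mul_star_self_of_mem hu, mul_one]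
        nth_rw 1 [← hxu]
        noncomm_ring
    _ = ‖x * (u - 1) - (u - 1) * x‖ := CStarRing.norm_mul_mem_unitary _ (Unitary.star_mem hu)
    _ ≤ ‖x‖ * ‖u - 1‖ + ‖u - 1‖ * ‖x‖ :=
        (norm_sub_le _ _).trans (add_le_add (norm_mul_le _ _) (norm_mul_le _ _))
    _ = 2 * ‖u - 1‖ * ‖x‖ := by ring

end CStarRing

section Wandering

theorem pow_mul_pow_add_mul_cancel {A : Type*} [Monoid A] {s w e : A} (hw : s * w * w = w)
    (he : s * w * e = e) (n j : ℕ) : s ^ n * (w ^ (n + j) * e) = w ^ j * e := by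
  induction n with
  | zero => rw [pow_zero, zero_add, one_mul]
  | succ n ih =>
    have hcancel : s * (w ^ (n + 1 + j) * e) = w ^ (n + j) * e := by
      rw [add_right_comm, pow_succ', ← mul_assoc, ← mul_assoc]
      rcases n + j with _ | k
      · rw [pow_zero, mul_one, he, one_mul]
      · rw [pow_succ', ← mul_assoc, hw]
    rw [pow_succ, mul_assoc, hcancel, ih]

theorem pow_mul_pow_mul_cancel {A : Type*} [Monoid A] {s w e : A} (hw : s * w * w = w)
    (he : s * w * e = e) (n : ℕ) : s ^ n * (w ^ n * e) = e := by
  simpa only [add_zero, pow_zero, one_mul] using pow_mul_pow_add_mul_cancel hw he n 0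

theorem mul_pow_mul_pow_mul_eq_zero_of_ne {A : Type*} [MonoidWithZero A] {s w e : A}
    (hw : s * w * w = w) (he : s * w * e = e) (hse : s * e = 0) (hew : e * w = 0) {n k : ℕ}
    (hnk : k ≠ n) : e * (s ^ n * (w ^ k * e)) = 0 := by
  rcases hnk.lt_or_gt with hlt | hgt
  · obtain ⟨j, rfl⟩ := Nat.exists_eq_add_of_lt hlt
    rw [show k + j + 1 = j + 1 + k by omega, pow_add, mul_assoc, pow_mul_pow_mul_cancel hw he,
      pow_succ, mul_assoc, hse, mul_zero, mul_zero]
  · obtain ⟨j, rfl⟩ := Nat.exists_eq_add_of_lt hgt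
    rw [add_assoc, pow_mul_pow_add_mul_cancel hw he, pow_succ', ← mul_assoc, ← mul_assoc, hew,
      zero_mul, zero_mul]

end Wandering

theorem exists_summable_smul (𝕜 : Type*) [RCLike 𝕜] {E : Type*} [NormedAddCommGroup E]
    [NormedSpace 𝕜 E] [CompleteSpace E] (x : ℕ → E) :
    ∃ c : ℕ → 𝕜, (∀ n, c n ≠ 0) ∧ Summable fun n => c n • x n := by
  let r (n : ℕ) : ℝ := (1 / 2) ^ n * (1 + ‖x n‖)⁻¹
  have hr (n : ℕ) : 0 < r n := by positivity
  refine ⟨fun n => r n, fun n => RCLike.ofReal_ne_zero.2 (hr n).ne',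
    .of_norm_bounded summable_geometric_two fun n => ?_⟩
  rw [norm_smul, RCLike.norm_of_nonneg (hr n).le, mul_assoc]
  refine mul_le_of_le_one_right (by positivity) ?_
  rw [inv_mul_le_one₀ (by positivity)]
  exact le_add_of_nonneg_left zero_le_one

section UnitalCompression

/-- The compression `p v p` of `v` to the corner of the projection `p`, extended by the identity on
the range of `1 - p`. It depends continuously on `p`, so it carries an isometry of one corner to an
almost isometric element of a nearby corner. -/
def unitalCompression {A : Type*} [Ring A] (p v : A) : A := p * v * p + (1 - p)

section Ring

variable {A : Type*} [Ring A] {p : A}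

theorem commute_unitalCompression (hp : IsIdempotentElem p) (v : A) :
    Commute p (unitalCompression p v) := by
  have hpc : Commute p (p * v * p) := by
    rw [commute_iff_eq, ← mul_assoc, ← mul_assoc, hp.eq, mul_assoc (p * v), hp.eq]
  exact hpc.add_right ((Commute.one_right p).sub_right (.refl p))

theorem unitalCompression_mul_one_sub (hp : IsIdempotentElem p) (v : A) :
    unitalCompression p v * (1 - p) = 1 - p := by
  rw [unitalCompression, add_mul, mul_assoc, hp.mul_one_sub_self, mul_zero, zero_add,
    hp.one_sub.eq]

theorem unitalCompression_mul_self (hp : IsIdempotentElem p) (v : A) :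
    unitalCompression p v * p = p * v * p := by
  rw [unitalCompression, add_mul, mul_assoc _ p, hp.eq, hp.one_sub_mul_self, add_zero]

theorem unitalCompression_one (hp : IsIdempotentElem p) : unitalCompression p 1 = 1 := by
  rw [unitalCompression, mul_one, hp.eq, add_sub_cancel]

theorem unitalCompression_mul (hp : IsIdempotentElem p) {b : A} (hb : Commute p b) (a : A) :
    unitalCompression p a * unitalCompression p b = unitalCompression p (a * b) := by
  have hpb : unitalCompression p b = b * p + (1 - p) := by
    rw [unitalCompression, hb.eq, mul_assoc, hp.eq]
  have hab : p * a * (p * b) * p = p * (a * b) * p := by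
    rw [hb.eq, mul_assoc, mul_assoc b, hp.eq, mul_assoc p a, ← mul_assoc a, ← mul_assoc]
  have hpbp : p * b * p = b * p := by rw [hb.eq, mul_assoc, hp.eq]
  calc unitalCompression p a * unitalCompression p b
      = p * a * (p * b) * p + p * a * (p * (1 - p)) + (b * p - p * b * p)
          + (1 - p) * (1 - p) := by
        rw [hpb, unitalCompression]; noncomm_ring
    _ = unitalCompression p (a * b) := by
        rw [hab, hpbp, hp.mul_one_sub_self, hp.one_sub.eq, mul_zero, add_zero, sub_self, add_zero,
          unitalCompression]

theorem star_unitalCompression [StarRing A] (hp : IsSelfAdjoint p) (v : A) :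
    star (unitalCompression p v) = unitalCompression p (star v) := by
  simp only [unitalCompression, star_add, star_mul, star_sub, star_one, hp.star_eq, mul_assoc]

end Ring

theorem norm_unitalCompression_sub_le {A : Type*} [NormedRing A] [StarRing A] [CStarRing A]
    {p q v : A} (hp : IsStarProjection p) (hq : IsStarProjection q) (hv : ‖v‖ ≤ 1) :
    ‖unitalCompression p v - unitalCompression q v‖ ≤ 3 * ‖p - q‖ := by
  have hsplit : unitalCompression p v - unitalCompression q v
      = (p - q) * (v * p) + q * v * (p - q) - (p - q) := by
    simp only [unitalCompression]; noncomm_ring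
  have hvp : ‖v * p‖ ≤ 1 :=
    (norm_mul_le v p).trans (mul_le_one₀ hv (norm_nonneg _) (IsStarProjection.norm_le p hp))
  have hqv : ‖q * v‖ ≤ 1 :=
    (norm_mul_le q v).trans (mul_le_one₀ (IsStarProjection.norm_le q hq) (norm_nonneg _) hv)
  calc ‖unitalCompression p v - unitalCompression q v‖
      ≤ ‖p - q‖ * ‖v * p‖ + ‖q * v‖ * ‖p - q‖ + ‖p - q‖ := by
        rw [hsplit]
        refine (norm_sub_le _ _).trans (add_le_add_left ((norm_add_le _ _).trans ?_) _)
        exact add_le_add (norm_mul_le _ _) (norm_mul_le _ _)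
    _ ≤ 3 * ‖p - q‖ := by nlinarith [norm_nonneg (p - q)]

end UnitalCompression

section PolarDecomposition

variable {T V : H →L[ℂ] H}

theorem norm_abs_apply (T : H →L[ℂ] H) (x : H) : ‖(CFC.abs T : H →L[ℂ] H) x‖ = ‖T x‖ := by
  have hR : star (CFC.abs T) * CFC.abs T = star T * T := by
    rw [(IsSelfAdjoint.of_nonneg (CFC.abs_nonneg T)).star_eq, CFC.abs_mul_abs]
  have hsq : ‖(CFC.abs T : H →L[ℂ] H) x‖ ^ 2 = ‖T x‖ ^ 2 := by
    rw [ContinuousLinearMap.apply_norm_sq_eq_inner_adjoint_left,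
      ContinuousLinearMap.apply_norm_sq_eq_inner_adjoint_left]
    exact congrArg (fun S : H →L[ℂ] H => RCLike.re (inner ℂ (S x) x)) hR
  exact (sq_eq_sq₀ (norm_nonneg _) (norm_nonneg _)).1 hsq

theorem denseRange_abs (hT : Function.Injective T) : DenseRange (CFC.abs T : H →L[ℂ] H) := by
  have hker : (CFC.abs T : H →L[ℂ] H).ker = ⊥ := LinearMap.ker_eq_bot'.2 fun x hx => by
    have hTx : ‖T x‖ = 0 := by
      rw [← norm_abs_apply, norm_eq_zero]
      exact hx
    exact (map_eq_zero_iff T hT).1 (norm_eq_zero.1 hTx)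
  have hbot : (CFC.abs T : H →L[ℂ] H).rangeᗮ = ⊥ := by
    rw [ContinuousLinearMap.IsStarNormal.orthogonal_range
      (IsSelfAdjoint.of_nonneg (CFC.abs_nonneg T)).isStarNormal, hker]
  exact Submodule.dense_iff_topologicalClosure_eq_top.2
    (Submodule.topologicalClosure_eq_top_iff.2 hbot)

theorem isRightRegular_abs (hT : Function.Injective T) : IsRightRegular (CFC.abs T) :=
  fun B C hBC => DFunLike.coe_injective <|
    (denseRange_abs hT).equalizer B.continuous C.continuous (congrArg DFunLike.coe hBC)

theorem exists_isometry_mul_abs_eq (hT : Function.Injective T) :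
    ∃ V : H →L[ℂ] H, star V * V = 1 ∧ V * CFC.abs T = T := by
  have hdense : DenseRange ((CFC.abs T : H →L[ℂ] H) : H →ₗ[ℂ] H) := denseRange_abs hT
  let V : H →L[ℂ] H := (T : H →ₗ[ℂ] H).extendOfNorm ((CFC.abs T : H →L[ℂ] H) : H →ₗ[ℂ] H)
  have hV (x : H) : V ((CFC.abs T : H →L[ℂ] H) x) = T x :=
    LinearMap.extendOfNorm_eq hdense ⟨1, fun y => by simpa using (norm_abs_apply T y).ge⟩ x
  have hisom (y : H) : ‖V y‖ = ‖y‖ := by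
    refine hdense.induction_on (p := fun y => ‖V y‖ = ‖y‖) y
      (isClosed_eq (by fun_prop) (by fun_prop)) fun x => ?_
    exact (congrArg norm (hV x)).trans (norm_abs_apply T x).symm
  exact ⟨V, (ContinuousLinearMap.norm_map_iff_adjoint_comp_self V).1 hisom,
    ContinuousLinearMap.ext hV⟩

theorem commute_of_mul_abs_eq (hT : Function.Injective T) (hV : V * CFC.abs T = T)
    {c : H →L[ℂ] H} (hcT : Commute c T) (hcT' : Commute T (star c)) : Commute c V := by
  refine isRightRegular_abs hT ?_
  calc c * V * CFC.abs T = T * c := by rw [mul_assoc, hV, hcT.eq]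
    _ = V * c * CFC.abs T := by
      rw [mul_assoc V, (Commute.cfcAbs_right hcT.symm hcT').eq, ← mul_assoc, hV]

theorem mem_of_mul_abs_eq {M : VonNeumannAlgebra H} (hT : Function.Injective T)
    (hV : V * CFC.abs T = T) (hTM : T ∈ M) : V ∈ M := by
  rw [← M.commutant_commutant, VonNeumannAlgebra.mem_commutant_iff]
  intro c hc
  have hcomm {c : H →L[ℂ] H} (hc : c ∈ M.commutant) : Commute T c :=
    VonNeumannAlgebra.mem_commutant_iff.1 hc T hTM
  exact commute_of_mul_abs_eq hT hV (hcomm hc).symm (hcomm (star_mem hc))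

theorem isUnit_of_mul_abs_eq (hVV : V * star V = 1) (hVV' : star V * V = 1)
    (hV : V * CFC.abs T = T) {L : H →L[ℂ] H} (hL : L * T = 1) : IsUnit T := by
  have hleft : L * V * CFC.abs T = 1 := by rw [mul_assoc, hV, hL]
  have hright : CFC.abs T * star (L * V) = 1 := by
    simpa only [star_mul, star_one, (IsSelfAdjoint.of_nonneg (CFC.abs_nonneg T)).star_eq]
      using congrArg star hleft
  have habs : IsUnit (CFC.abs T) :=
    isUnit_iff_exists_and_exists.2 ⟨⟨_, hright⟩, ⟨_, hleft⟩⟩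
  have hVu : IsUnit V := isUnit_iff_exists_and_exists.2 ⟨⟨_, hVV⟩, ⟨_, hVV'⟩⟩
  exact hV ▸ hVu.mul habs

end PolarDecomposition

section ClosedSubspaces

variable {K : Submodule ℂ H} [K.HasOrthogonalProjection]

theorem starProjection_mem_iff {M : VonNeumannAlgebra H} :
    K.starProjection ∈ M ↔ ∀ c ∈ M.commutant, ∀ x ∈ K, c x ∈ K := by
  rw [VonNeumannAlgebra.IsStarProjection.mem_iff isStarProjection_starProjection]
  simp only [Submodule.range_starProjection]
  rfl

theorem IsFactor.eq_bot_or_eq_top {M : VonNeumannAlgebra H} (hM : IsFactor M)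
    (hK : ∀ c ∈ M, ∀ x ∈ K, c x ∈ K) (hK' : ∀ c ∈ M.commutant, ∀ x ∈ K, c x ∈ K) :
    K = ⊥ ∨ K = ⊤ := by
  obtain ⟨c, hc⟩ := hM K.starProjection (starProjection_mem_iff.2 hK')
    (starProjection_mem_iff.2 (by rwa [M.commutant_commutant]))
  have hcx {x : H} (hx : x ∈ K) : c • x = x := by
    simpa only [hc, smul_apply, one_apply_eq_self]
      using Submodule.starProjection_eq_self_iff.2 hx
  by_cases hc0 : c = 0
  · refine .inl ((Submodule.eq_bot_iff K).2 fun x hx => ?_)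
    rw [← hcx hx, hc0, zero_smul]
  · refine .inr (Submodule.eq_top_iff'.2 fun x => ?_)
    have hcK : c • x ∈ K := by
      simpa only [hc, smul_apply, one_apply_eq_self]
        using K.starProjection_apply_mem x
    exact (K.smul_mem_iff hc0).1 hcK

end ClosedSubspaces

section Factors

variable {M : VonNeumannAlgebra H}

theorem commute_of_mem_commutant {x y : H →L[ℂ] H} (hx : x ∈ M) (hy : y ∈ M.commutant) :
    Commute x y :=
  VonNeumannAlgebra.mem_commutant_iff.1 hy x hx

theorem apply_comm_of_mem_commutant {x y : H →L[ℂ] H} (hx : x ∈ M) (hy : y ∈ M.commutant)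
    (ξ : H) : x (y ξ) = y (x ξ) :=
  congrArg (fun f : H →L[ℂ] H => f ξ) (commute_of_mem_commutant hx hy).eq

theorem IsFactor.eq_zero_of_forall_apply_eq_zero (hM : IsFactor M) {a : H →L[ℂ] H} (ha : a ∈ M)
    (ha0 : a ≠ 0) {ξ : H} (hξ : ∀ b ∈ M, a (b ξ) = 0) : ξ = 0 := by
  let K : Submodule ℂ H := ⨅ b : M, (a * b.1).ker
  have hmem (η : H) : η ∈ K ↔ ∀ b ∈ M, a (b η) = 0 := by
    simp only [K, Submodule.mem_iInf, Subtype.forall]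
    rfl
  have hclosed : IsClosed (K : Set H) := by
    simp only [K, Submodule.coe_iInf]
    exact isClosed_iInter fun b => (a * b.1).isClosed_ker
  have : CompleteSpace K := hclosed.completeSpace_coe
  have hKM : ∀ c ∈ M, ∀ η ∈ K, c η ∈ K := fun c hc η hη =>
    (hmem _).2 fun b hb => (hmem η).1 hη (b * c) (mul_mem hb hc)
  have hKM' : ∀ c ∈ M.commutant, ∀ η ∈ K, c η ∈ K := fun c hc η hη =>
    (hmem _).2 fun b hb => by
      rw [apply_comm_of_mem_commutant hb hc, apply_comm_of_mem_commutant ha hc, (hmem η).1 hη b hb,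
        map_zero]
  rcases hM.eq_bot_or_eq_top hKM hKM' with hbot | htop
  · exact (Submodule.mem_bot ℂ).1 (hbot ▸ (hmem ξ).2 hξ)
  · exact absurd (ContinuousLinearMap.ext fun η => (hmem η).1 (htop ▸ Submodule.mem_top) 1
      (one_mem M)) ha0

theorem IsFactor.mul_ne_zero_of_mem_commutant (hM : IsFactor M) {x y : H →L[ℂ] H} (hx : x ∈ M)
    (hy : y ∈ M.commutant) (hx0 : x ≠ 0) (hy0 : y ≠ 0) : x * y ≠ 0 := by
  intro hxy
  refine hy0 (ContinuousLinearMap.ext fun η =>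
    hM.eq_zero_of_forall_apply_eq_zero hx hx0 fun b hb => ?_)
  rw [apply_comm_of_mem_commutant hb hy]
  exact congrArg (fun f : H →L[ℂ] H => f (b η)) hxy

theorem IsFactor.exists_seq_separating [TopologicalSpace.SeparableSpace H] (hM : IsFactor M)
    {e : H →L[ℂ] H} (he : e ∈ M) (he0 : e ≠ 0) :
    ∃ a : ℕ → H →L[ℂ] H, (∀ n, a n ∈ M) ∧ ∀ ξ, (∀ n, e (a n ξ) = 0) → ξ = 0 := by
  have : SecondCountableTopology H := UniformSpace.secondCountable_of_separable H
  obtain ⟨a, ha⟩ := (HereditarilyLindelofSpace.isLindelof ({0}ᶜ : Set H)).indexed_countable_subcover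
    (fun b : M => {ξ : H | e (b.1 ξ) ≠ 0})
    (fun b => isOpen_ne_fun (by fun_prop) continuous_const) fun ξ hξ => by
      by_contra h
      simp only [Set.mem_iUnion, Set.mem_ofPred_eq, not_exists, not_not] at h
      exact hξ (hM.eq_zero_of_forall_apply_eq_zero he he0 fun b hb => h ⟨b, hb⟩)
  refine ⟨fun n => (a n).1, fun n => (a n).2, fun ξ hξ => ?_⟩
  by_contra hξ0
  obtain ⟨n, hn⟩ := Set.mem_iUnion.1 (ha hξ0)
  exact hn (hξ n)

end Factors

section InfiniteProjections

variable {M : VonNeumannAlgebra H} {q V : H →L[ℂ] H}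

theorem isClosed_vonNeumannAlgebra (M : VonNeumannAlgebra H) :
    IsClosed (M : Set (H →L[ℂ] H)) := by
  rw [← M.centralizer_centralizer]
  exact Set.isClosed_centralizer _

theorem InfiniteProj.isStarProjection (hq : InfiniteProj M q) : IsStarProjection q := by
  obtain ⟨r, -, ⟨hrs, hrr⟩, -, -, w, -, hwq, hwr⟩ := hq
  have h : IsStarProjection (star (star w) * star w) := by
    rw [star_star, hwr]
    exact ⟨hrr, hrs⟩
  simpa only [star_star, hwq] using isStarProjection_mul_star_self h

theorem InfiniteProj.exists_wandering (hq : InfiniteProj M q) :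
    ∃ w ∈ M, ∃ e ∈ M, star w * w = q ∧ q * w = w ∧
      IsStarProjection e ∧ e ≠ 0 ∧ q * e = e ∧ e * w = 0 := by
  have hqproj := hq.isStarProjection
  obtain ⟨r, hrM, ⟨hrs, hrr⟩, hrq, hne, w, hwM, hwq, hwr⟩ := hq
  have hqr : q * r = r := by
    simpa only [star_mul, hrs.star_eq, hqproj.isSelfAdjoint.star_eq] using congrArg star hrq
  have hrw : r * w = w := by
    rw [← hwr, mul_assoc, mul_star_mul_self_of_isStarProjection (hwq ▸ hqproj)]
  have hqw : q * w = w := by rw [← hrw, ← mul_assoc, hqr]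
  have hqM : q ∈ M := hwq ▸ mul_mem (star_mem hwM) hwM
  refine ⟨w, hwM, q - r, sub_mem hqM hrM, hwq, hqw,
    .sub_of_mul_eq_left ⟨hrr, hrs⟩ hqproj hrq, sub_ne_zero.2 hne.symm, ?_, ?_⟩
  · rw [mul_sub, hqproj.isIdempotentElem.eq, hqr]
  · rw [sub_mul, hqw, hrw, sub_self]

theorem InfiniteProj.exists_injective [TopologicalSpace.SeparableSpace H] (hM : IsFactor M)
    (hq : InfiniteProj M q) : ∃ T ∈ M, q * T = T ∧ Function.Injective T := by
  obtain ⟨w, hwM, e, heM, hwq, hqw, he, he0, hqe, hew⟩ := hq.exists_wandering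
  have hww : star w * w * w = w := by rw [hwq, hqw]
  have hwe : star w * w * e = e := by rw [hwq, hqe]
  have hse : star w * e = 0 := by
    simpa only [star_mul, star_zero, he.isSelfAdjoint.star_eq] using congrArg star hew
  obtain ⟨a, haM, ha⟩ := hM.exists_seq_separating heM he0
  obtain ⟨c, hc0, hsum⟩ := exists_summable_smul ℂ fun n => w ^ n * e * a n
  have hqt (n : ℕ) : q * (c n • (w ^ n * e * a n)) = c n • (w ^ n * e * a n) := by
    have hqwe : q * (w ^ n * e) = w ^ n * e := by
      rcases n with _ | n
      · rw [pow_zero, one_mul, hqe]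
      · rw [pow_succ', ← mul_assoc, ← mul_assoc, hqw]
    rw [mul_smul_comm, ← mul_assoc, hqwe]
  have hcomponent (n : ℕ) :
      e * star w ^ n * ∑' k, c k • (w ^ k * e * a k) = c n • (e * a n) := by
    rw [← hsum.tsum_mul_left, tsum_eq_single n]
    · rw [mul_smul_comm, mul_assoc, ← mul_assoc _ (w ^ n * e), pow_mul_pow_mul_cancel hww hwe,
        ← mul_assoc, he.isIdempotentElem.eq]
    · intro k hk
      rw [mul_smul_comm, ← mul_assoc, mul_assoc e,
        mul_pow_mul_pow_mul_eq_zero_of_ne hww hwe hse hew hk, zero_mul, smul_zero]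
  refine ⟨∑' k, c k • (w ^ k * e * a k), ?_, ?_, (injective_iff_map_eq_zero _).2 fun ξ hξ => ?_⟩
  · exact tsum_mem (isClosed_vonNeumannAlgebra M) fun n =>
      M.toStarSubalgebra.smul_mem (mul_mem (mul_mem (pow_mem hwM n) heM) (haM n)) (c n)
  · rw [← hsum.tsum_mul_left]
    exact tsum_congr hqt
  · refine ha ξ fun n => (smul_eq_zero.1 (?_ : c n • e (a n ξ) = 0)).resolve_left (hc0 n)
    have h := congrArg (fun S : H →L[ℂ] H => S ξ) (hcomponent n)
    simpa only [mul_apply_eq_comp, smul_apply, hξ, map_zero, eq_comm] using h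

theorem exists_isStarProjection_mul_eq_self_iff (hqM : q ∈ M) (hVM : V ∈ M) :
    ∃ f ∈ M, IsStarProjection f ∧
      ∀ S, f * S = S ↔ q * S = S ∧ f * (star V * S) = star V * S := by
  let K : Submodule ℂ H := ⨅ n : ℕ, ((1 - q) * star V ^ n).ker
  have hmem (η : H) : η ∈ K ↔ ∀ n : ℕ, (1 - q) ((star V ^ n) η) = 0 := by
    simp only [K, Submodule.mem_iInf]
    rfl
  have hclosed : IsClosed (K : Set H) := by
    simp only [K, Submodule.coe_iInf]
    exact isClosed_iInter fun n => ((1 - q) * star V ^ n).isClosed_ker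
  have : CompleteSpace K := hclosed.completeSpace_coe
  have hKM : ∀ c ∈ M.commutant, ∀ η ∈ K, c η ∈ K := fun c hc η hη => (hmem _).2 fun n => by
    rw [apply_comm_of_mem_commutant (pow_mem (star_mem hVM) n) hc,
      apply_comm_of_mem_commutant (sub_mem (one_mem M) hqM) hc, (hmem η).1 hη n, map_zero]
  have hmem_iff (η : H) : η ∈ K ↔ q η = η ∧ star V η ∈ K := by
    rw [hmem, hmem, ← Nat.and_forall_add_one, eq_comm (a := q η), ← sub_eq_zero (b := q η)]
    rfl
  refine ⟨K.starProjection, starProjection_mem_iff.2 hKM, isStarProjection_starProjection,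
    fun S => ?_⟩
  simp only [ContinuousLinearMap.ext_iff, mul_apply_eq_comp, Submodule.starProjection_eq_self_iff]
  rw [← forall_and]
  exact forall_congr' fun ξ => hmem_iff (S ξ)

-- Cantor–Bernstein: with `f` fixed by `f ↦ (q - V V*) + V f V*`, the operator `V (1 - f) + f` is an
-- isometry onto the range of `q`.
theorem exists_isStarProjection_eq_sub_add_conj (hq : IsStarProjection q) (hqM : q ∈ M)
    (hVM : V ∈ M) (hVV : star V * V = 1) (hqV : q * V = V) :
    ∃ f ∈ M, IsStarProjection f ∧ Commute f V ∧ f = q - V * star V + V * f * star V := by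
  obtain ⟨f, hfM, hf, hf_iff⟩ := exists_isStarProjection_mul_eq_self_iff hqM hVM
  obtain ⟨hqf, hVf⟩ := (hf_iff f).1 hf.isIdempotentElem
  have hfq : f * q = f := by
    simpa only [star_mul, hf.isSelfAdjoint.star_eq, hq.isSelfAdjoint.star_eq]
      using congrArg star hqf
  have hVq : star V * q = star V := by
    simpa only [star_mul, hq.isSelfAdjoint.star_eq] using congrArg star hqV
  have hcomm : f * V = V * f := by
    have hfVf : f * (V * f) = V * f := (hf_iff _).2
      ⟨by rw [← mul_assoc, hqV], by rw [← mul_assoc (star V), hVV, one_mul, hf.isIdempotentElem.eq]⟩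
    have hfVf' : f * V * f = f * V := by
      simpa only [star_mul, star_star, hf.isSelfAdjoint.star_eq] using congrArg star hVf
    rw [← hfVf, ← mul_assoc, hfVf']
  have hfe : f * (q - V * star V) = q - V * star V := by
    refine (hf_iff _).2 ⟨?_, ?_⟩
    · rw [mul_sub, hq.isIdempotentElem.eq, ← mul_assoc, hqV]
    · rw [mul_sub, ← mul_assoc, hVV, one_mul, hVq, sub_self, mul_zero]
  refine ⟨f, hfM, hf, hcomm, ?_⟩
  rw [← hcomm, ← hfe, mul_assoc, ← mul_add, sub_add_cancel, hfq]

theorem mvnEquiv_one_of_isometry (hq : IsStarProjection q) (hqM : q ∈ M) (hVM : V ∈ M)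
    (hVV : star V * V = 1) (hqV : q * V = V) : MvNEquiv M q 1 := by
  obtain ⟨f, hfM, hf, hfV, hfix⟩ := exists_isStarProjection_eq_sub_add_conj hq hqM hVM hVV hqV
  have hidem : f * f = f := hf.isIdempotentElem.eq
  have hfV' : Commute f (star V) := by
    simpa only [hf.isSelfAdjoint.star_eq] using hfV.star_star
  obtain ⟨w, hw⟩ : ∃ w, w = V * (1 - f) + f := ⟨_, rfl⟩
  have hws : star w = (1 - f) * star V + f := by
    simp only [hw, star_add, star_mul, star_sub, star_one, hf.isSelfAdjoint.star_eq]
  have hone_sub : (1 - f) * (1 - f) = 1 - f := hf.isIdempotentElem.one_sub.eq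
  have hmul : (1 - f) * f = 0 := hf.isIdempotentElem.one_sub_mul_self
  have hmul' : f * (1 - f) = 0 := hf.isIdempotentElem.mul_one_sub_self
  have hwM : w ∈ M := hw ▸ add_mem (mul_mem hVM (sub_mem (one_mem M) hfM)) hfM
  refine ⟨star w, star_mem hwM, ?_, ?_⟩
  · calc star (star w) * star w
        = V * ((1 - f) * (1 - f)) * star V + V * ((1 - f) * f) + f * (1 - f) * star V + f * f := by
          rw [star_star, hws, hw]; noncomm_ring
      _ = f - V * f * star V + V * star V := by
          rw [hone_sub, hmul, hmul', hidem]; noncomm_ring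
      _ = q := by
          nth_rw 1 [hfix]; abel
  · calc star w * star (star w)
        = (1 - f) * (star V * V) * (1 - f) + (1 - f) * (star V * f) + f * V * (1 - f) + f * f := by
          rw [star_star, hws, hw]; noncomm_ring
      _ = (1 - f) * (1 - f) + (1 - f) * f * star V + V * (f * (1 - f)) + f * f := by
          rw [hVV, ← hfV'.eq, hfV.eq]; noncomm_ring
      _ = 1 := by
          rw [hone_sub, hmul, hmul', hidem, zero_mul, mul_zero, add_zero, add_zero, sub_add_cancel]

theorem InfiniteProj.mvnEquiv_one [TopologicalSpace.SeparableSpace H] (hM : IsFactor M)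
    (hq : InfiniteProj M q) : MvNEquiv M q 1 := by
  obtain ⟨T, hTM, hqT, hT⟩ := hq.exists_injective hM
  obtain ⟨V, hVV, hVT⟩ := exists_isometry_mul_abs_eq hT
  have hqV : q * V = V := isRightRegular_abs hT <| by
    simp only [mul_assoc, hVT, hqT]
  have hqM : q ∈ M := by
    obtain ⟨-, -, -, -, -, w, hwM, rfl, -⟩ := hq
    exact mul_mem (star_mem hwM) hwM
  exact mvnEquiv_one_of_isometry hq.isStarProjection hqM (mem_of_mul_abs_eq hT hVT hTM) hVV hqV

theorem infiniteProj_of_isometry (hq : IsStarProjection q) (hqM : q ∈ M) (hVM : V ∈ M)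
    (hVV : star V * V = 1) (hqV : Commute q V) (hV : V * star V * (1 - q) = 1 - q)
    (hV1 : V * star V ≠ 1) : InfiniteProj M q := by
  have hidem : q * q = q := hq.isIdempotentElem.eq
  have hqV' : Commute q (star V) := by
    simpa only [hq.isSelfAdjoint.star_eq] using hqV.star_star
  have hw : star (V * q) = q * star V := by rw [star_mul, hq.isSelfAdjoint.star_eq]
  have hwq : star (V * q) * (V * q) = q := by
    rw [hw, mul_assoc, ← mul_assoc (star V), hVV, one_mul, hidem]
  have hrange : V * q * star (V * q) = V * star V * q := by
    rw [hw, mul_assoc, ← mul_assoc q, hidem, hqV'.eq, mul_assoc]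
  have hr : IsStarProjection (V * q * star (V * q)) :=
    isStarProjection_mul_star_self (hwq.symm ▸ hq)
  refine ⟨V * q * star (V * q), mul_mem (mul_mem hVM hqM) (star_mem (mul_mem hVM hqM)),
    ⟨hr.isSelfAdjoint, hr.isIdempotentElem⟩, ?_, fun h => hV1 ?_,
    V * q, mul_mem hVM hqM, hwq, rfl⟩
  · rw [hrange, mul_assoc, hidem]
  · calc V * star V = V * star V * q + V * star V * (1 - q) := by noncomm_ring
      _ = 1 := by rw [hV, ← hrange, h, add_sub_cancel]

theorem infiniteProj_of_mul_eq_one {A L : H →L[ℂ] H} (hq : IsStarProjection q) (hqM : q ∈ M)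
    (hAM : A ∈ M) (hqA : Commute q A) (hA : A * (1 - q) = 1 - q) (hL : L * A = 1)
    (hAu : ¬ IsUnit A) : InfiniteProj M q := by
  have hinj : Function.Injective A :=
    Function.LeftInverse.injective (g := L) fun ξ => congrArg (fun S : H →L[ℂ] H => S ξ) hL
  obtain ⟨V, hVV, hVA⟩ := exists_isometry_mul_abs_eq hinj
  have hqV : Commute q V :=
    commute_of_mul_abs_eq hinj hVA hqA (hq.isSelfAdjoint.star_eq.symm ▸ hqA.symm)
  have hV : V * star V * (1 - q) = 1 - q := by
    have hVVA : V * star V * A = A := by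
      rw [← hVA, mul_assoc, ← mul_assoc (star V), hVV, one_mul]
    rw [← hA, ← mul_assoc, hVVA]
  exact infiniteProj_of_isometry hq hqM (mem_of_mul_abs_eq hinj hVA hAM) hVV hqV hV
    fun hVV' => hAu (isUnit_of_mul_abs_eq hVV' hVV hVA hL)

theorem infiniteProj_of_norm_sub_lt {p v : H →L[ℂ] H} (hp : IsStarProjection p)
    (hq : IsStarProjection q) (hqM : q ∈ M) (hvM : v ∈ M) (hvv : star v * v = 1)
    (hpv : Commute p v) (hpv_ne : p * (v * star v) ≠ p) (hpq : ‖p - q‖ < 1 / 3) :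
    InfiniteProj M q := by
  have hpv' : Commute p (star v) := by
    simpa only [hp.isSelfAdjoint.star_eq] using hpv.star_star
  have hpi := hp.isIdempotentElem
  have hqi := hq.isIdempotentElem
  obtain ⟨A, hA⟩ : ∃ A, A = unitalCompression q v := ⟨_, rfl⟩
  obtain ⟨B, hB⟩ : ∃ B, B = unitalCompression p v := ⟨_, rfl⟩
  have hBs : star B = unitalCompression p (star v) :=
    hB ▸ star_unitalCompression hp.isSelfAdjoint v
  have hBB : star B * B = 1 := by
    rw [hBs, hB, unitalCompression_mul hpi hpv, hvv, unitalCompression_one hpi]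
  have hBB' : B * star B ≠ 1 := by
    rw [hBs, hB, unitalCompression_mul hpi hpv']
    intro h
    apply hpv_ne
    calc p * (v * star v) = p * (v * star v) * p := by
          rw [mul_assoc p, ← (hpv.mul_right hpv').eq, ← mul_assoc p p, hpi.eq]
      _ = p := by rw [← unitalCompression_mul_self hpi, h, one_mul]
  have hBA : ‖B - A‖ < 1 := by
    have h := norm_unitalCompression_sub_le hp hq (norm_le_one_of_star_mul_self_eq_one hvv)
    rw [← hA, ← hB] at h
    linarith
  obtain ⟨C, hC⟩ := (isUnit_star_mul_of_norm_sub_lt_one hBB hBA).exists_left_inv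
  have hAM : A ∈ M :=
    hA ▸ add_mem (mul_mem (mul_mem hqM hvM) hqM) (sub_mem (one_mem M) hqM)
  refine infiniteProj_of_mul_eq_one (L := C * star B) hq hqM hAM
    (hA ▸ commute_unitalCompression hqi v) (hA ▸ unitalCompression_mul_one_sub hqi v) ?_
    fun hAu => hBB' (mul_star_self_eq_one_of_norm_sub_lt_one hBB hBA hAu)
  rw [mul_assoc, hC]

end InfiniteProjections

theorem stmt10 :
    ∃ δ : ℝ, 0 < δ ∧ δ < 1 / 2 ∧
      ∀ (H : Type*) [NormedAddCommGroup H] [InnerProductSpace ℂ H] [CompleteSpace H]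
        [TopologicalSpace.SeparableSpace H],
        ∀ N M : VonNeumannAlgebra H,
          (∀ x : H →L[ℂ] H, x ∈ N → x ∈ M) →
          InfiniteFactor N → InfiniteFactor M →
          ∀ p : H →L[ℂ] H, IsProjectionOp p → p ≠ 0 → p ∈ N.commutant →
          ∀ u : H →L[ℂ] H, star u * u = 1 → u * star u = 1 →
            u * p * star u ∈ M → ‖u - 1‖ < δ →
            MvNEquiv M (u * p * star u) 1 := by
  refine ⟨1 / 6, by norm_num, by norm_num, ?_⟩
  intro H _ _ _ _ N M hNM ⟨hN, r, hrN, _, _, hr1, v, hvN, hvv, hvr⟩ ⟨hM, _⟩ p hp hp0 hpN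
    u hu hu' hqM hu1
  have hpp : IsStarProjection p := ⟨hp.2, hp.1⟩
  have huU : u ∈ unitary (H →L[ℂ] H) := ⟨hu, hu'⟩
  have hq : IsStarProjection (u * p * star u) := hpp.map (Unitary.conjStarAlgAut ℂ _ ⟨u, huU⟩)
  have hpq : ‖p - u * p * star u‖ < 1 / 3 := by
    have h := norm_sub_conj_le huU p
    have hp_le : ‖p‖ ≤ 1 := IsStarProjection.norm_le p hpp
    nlinarith [norm_nonneg (u - 1)]
  have hpv : p * (v * star v) ≠ p := fun h => by
    have hrp : r * p = p := by rw [(commute_of_mem_commutant hrN hpN).eq, ← hvr, h]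
    refine hN.mul_ne_zero_of_mem_commutant (sub_mem (one_mem N) hrN) hpN
      (sub_ne_zero.2 hr1.symm) hp0 ?_
    rw [sub_mul, one_mul, hrp, sub_self]
  exact InfiniteProj.mvnEquiv_one hM <|
    infiniteProj_of_norm_sub_lt hpp hq hqM (hNM v hvN) hvv
      (commute_of_mem_commutant hvN hpN).symm hpv hpq
end

section
/- Let H be a complex Hilbert space, let x, y be bounded operators on H, and let U, Ũ be unitary operators on H. Assume that U*·x·U commutes with y and that Ũ commutes with y. Then ‖x·y − y·x‖ ≤ 4·‖U − Ũ‖·‖x‖·‖y‖. -/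
/-!
Conjugation by `u` turns `x` into `z = u⋆ x u`, so `x u = u z`; as `z` commutes with `y`,
`⁅x, y⁆ u = ⁅u, y⁆ z - x ⁅u, y⁆`. Since `u u⋆ = 1`, right multiplication by `u` preserves the norm
and `‖z‖ = ‖x‖`, whence `‖⁅x, y⁆‖ ≤ 2 ‖⁅u, y⁆‖ ‖x‖`. Finally `⁅u, y⁆ = ⁅u - v, y⁆` for every `v`
commuting with `y`, which bounds its norm by `2 ‖u - v‖ ‖y‖`.
-/

theorem lie_mul_eq_of_semiconjBy {R : Type*} [NonUnitalRing R] {u x y z : R}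
    (hu : SemiconjBy u z x) (hz : Commute z y) : ⁅x, y⁆ * u = ⁅u, y⁆ * z - x * ⁅u, y⁆ := by
  have hyxu : y * x * u = y * u * z := by rw [mul_assoc, ← hu.eq, mul_assoc]
  have hxuy : x * u * y = u * y * z := by rw [← hu.eq, mul_assoc, hz.eq, mul_assoc]
  simp only [Ring.lie_def, sub_mul, mul_sub, ← mul_assoc, hyxu, hxuy]
  abel

theorem norm_lie_le_two_mul {R : Type*} [NonUnitalSeminormedRing R] (a b : R) :
    ‖⁅a, b⁆‖ ≤ 2 * ‖a‖ * ‖b‖ :=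
  calc
    ‖a * b - b * a‖ ≤ ‖a * b‖ + ‖b * a‖ := norm_sub_le _ _
    _ ≤ ‖a‖ * ‖b‖ + ‖b‖ * ‖a‖ := add_le_add (norm_mul_le _ _) (norm_mul_le _ _)
    _ = 2 * ‖a‖ * ‖b‖ := by ring

theorem norm_lie_le_two_mul_norm_sub_of_commute {R : Type*} [NonUnitalSeminormedRing R]
    {b c : R} (a : R) (hc : Commute c b) : ‖⁅a, b⁆‖ ≤ 2 * ‖a - c‖ * ‖b‖ := by
  have hlie : ⁅a - c, b⁆ = ⁅a, b⁆ := by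
    simp only [Ring.lie_def, sub_mul, mul_sub, hc.eq]
    abel
  exact hlie ▸ norm_lie_le_two_mul (a - c) b

section CStarRing

variable {A : Type*} [NormedRing A] [StarRing A] [CStarRing A] {u : A}

theorem norm_mul_of_mul_star_eq_one (hu : u * star u = 1) (a : A) : ‖a * u‖ = ‖a‖ := by
  have hgram : a * u * star (a * u) = a * star a := by
    rw [star_mul, mul_assoc, ← mul_assoc u, hu, one_mul]
  rw [← mul_self_inj (norm_nonneg _) (norm_nonneg _), ← CStarRing.norm_self_mul_star, hgram,
    CStarRing.norm_self_mul_star]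

theorem norm_star_mul_of_mul_star_eq_one (hu : u * star u = 1) (a : A) : ‖star u * a‖ = ‖a‖ := by
  rw [← norm_star, star_mul, star_star, norm_mul_of_mul_star_eq_one hu, norm_star]

theorem norm_lie_le_of_commute_star_mul_mul {x y : A} (hu : u * star u = 1)
    (hxy : Commute (star u * x * u) y) : ‖⁅x, y⁆‖ ≤ 2 * ‖⁅u, y⁆‖ * ‖x‖ := by
  set z := star u * x * u with hz
  have hconj : SemiconjBy u z x := by
    rw [SemiconjBy, hz, ← mul_assoc, ← mul_assoc, hu, one_mul]
  have hnorm : ‖z‖ = ‖x‖ := by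
    rw [hz, norm_mul_of_mul_star_eq_one hu, norm_star_mul_of_mul_star_eq_one hu]
  calc
    ‖⁅x, y⁆‖ = ‖⁅u, y⁆ * z - x * ⁅u, y⁆‖ := by
      rw [← norm_mul_of_mul_star_eq_one hu, lie_mul_eq_of_semiconjBy hconj hxy]
    _ ≤ ‖⁅u, y⁆ * z‖ + ‖x * ⁅u, y⁆‖ := norm_sub_le _ _
    _ ≤ ‖⁅u, y⁆‖ * ‖z‖ + ‖x‖ * ‖⁅u, y⁆‖ := add_le_add (norm_mul_le _ _) (norm_mul_le _ _)
    _ = 2 * ‖⁅u, y⁆‖ * ‖x‖ := by rw [hnorm]; ring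

theorem stmt16_general {v x y : A} (hu : u * star u = 1)
    (hxy : Commute (star u * x * u) y) (hvy : Commute v y) :
    ‖x * y - y * x‖ ≤ 4 * ‖u - v‖ * ‖x‖ * ‖y‖ :=
  calc
    ‖⁅x, y⁆‖ ≤ 2 * ‖⁅u, y⁆‖ * ‖x‖ := norm_lie_le_of_commute_star_mul_mul hu hxy
    _ ≤ 2 * (2 * ‖u - v‖ * ‖y‖) * ‖x‖ := by
      gcongr
      exact norm_lie_le_two_mul_norm_sub_of_commute u hvy
    _ = 4 * ‖u - v‖ * ‖x‖ * ‖y‖ := by ring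

end CStarRing

theorem stmt16 {H : Type*} [NormedAddCommGroup H] [InnerProductSpace ℂ H] [CompleteSpace H]
    (x y U V : H →L[ℂ] H)
    (hU₁ : star U * U = 1) (hU₂ : U * star U = 1)
    (hV₁ : star V * V = 1) (hV₂ : V * star V = 1)
    (hcomm : (star U * x * U) * y = y * (star U * x * U))
    (hVy : V * y = y * V) :
    ‖x * y - y * x‖ ≤ 4 * ‖U - V‖ * ‖x‖ * ‖y‖ :=
  stmt16_general hU₂ hcomm hVy
end

section
/- Let B be a C*-algebra and T : B → B a *-homomorphism. Let U ∈ B be unitary and let x ∈ B satisfy T(U*·x·U) = U*·x·U. Then ‖T(x) − x‖ ≤ 2·‖T(U) − U‖·‖x‖. -/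
/-!
If `u * star u = 1`, then `x = u * y * star u` with `y = star u * x * u`. Two star homomorphisms
`S`, `T` with `S y = T y = z` therefore send `x` to the conjugates of the same element `z` by `S u`
and by `T u`, and conjugation of `z` is Lipschitz in the conjugating element. The fixed-point
estimate is the case where one of the two homomorphisms is the identity.
-/

section NormedStarGroup

variable {B : Type*} [NonUnitalSeminormedRing B] [StarAddMonoid B] [NormedStarGroup B]

theorem norm_mul_mul_star_sub_le (a b y : B) :
    ‖a * y * star a - b * y * star b‖ ≤ (‖a‖ + ‖b‖) * ‖a - b‖ * ‖y‖ := by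
  have telescope : a * y * star a - b * y * star b
      = (a - b) * y * star a + b * y * star (a - b) := by
    rw [star_sub]
    noncomm_ring
  calc ‖a * y * star a - b * y * star b‖
      ≤ ‖(a - b) * y * star a‖ + ‖b * y * star (a - b)‖ := telescope ▸ norm_add_le _ _
    _ ≤ ‖a - b‖ * ‖y‖ * ‖star a‖ + ‖b‖ * ‖y‖ * ‖star (a - b)‖ :=
        add_le_add (norm_mul₃_le ..) (norm_mul₃_le ..)
    _ = (‖a‖ + ‖b‖) * ‖a - b‖ * ‖y‖ := by
        rw [norm_star, norm_star]
        ring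

theorem norm_star_mul_mul_le_of_norm_le_one {v : B} (hv : ‖v‖ ≤ 1) (x : B) :
    ‖star v * x * v‖ ≤ ‖x‖ :=
  calc ‖star v * x * v‖ ≤ ‖star v‖ * ‖x‖ * ‖v‖ := norm_mul₃_le ..
    _ = ‖v‖ * ‖x‖ * ‖v‖ := by rw [norm_star]
    _ ≤ 1 * ‖x‖ * 1 := by gcongr
    _ = ‖x‖ := by rw [one_mul, mul_one]

end NormedStarGroup

theorem mul_star_mul_mul_mul_star_of_mul_star_eq_one {A : Type*} [Monoid A] [Star A] {u : A}
    (hu : u * star u = 1) (x : A) : u * (star u * x * u) * star u = x :=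
  calc u * (star u * x * u) * star u = (u * star u) * x * (u * star u) := by simp only [mul_assoc]
    _ = x := by rw [hu, one_mul, mul_one]

section CStarRing

variable {B : Type*} [NormedRing B] [StarRing B] [CStarRing B]

theorem norm_le_one_of_mul_star_eq_one {v : B} (hv : v * star v = 1) : ‖v‖ ≤ 1 := by
  nontriviality B
  have norm_sq : ‖v‖ * ‖v‖ = 1 := by
    rw [← CStarRing.norm_self_mul_star, hv, CStarRing.norm_one]
  nlinarith [norm_nonneg v]

theorem norm_map_le_one_of_mul_star_eq_one {A F : Type*} [Monoid A] [Star A]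
    [FunLike F A B] [MonoidHomClass F A B] [StarHomClass F A B] (T : F) {u : A}
    (hu : u * star u = 1) : ‖T u‖ ≤ 1 :=
  norm_le_one_of_mul_star_eq_one (by rw [← map_star, ← map_mul, hu, map_one])

theorem stmt17_general {A F G : Type*} [Monoid A] [Star A]
    [FunLike F A B] [MonoidHomClass F A B] [StarHomClass F A B]
    [FunLike G A B] [MonoidHomClass G A B] [StarHomClass G A B]
    (S : F) (T : G) {u x : A} (hu : u * star u = 1)
    (h : S (star u * x * u) = T (star u * x * u)) :
    ‖S x - T x‖ ≤ 2 * ‖S u - T u‖ * ‖T x‖ := by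
  set y := star u * x * u with hy
  have hx : u * y * star u = x := mul_star_mul_mul_mul_star_of_mul_star_eq_one hu x
  have hSx : S x = S u * T y * star (S u) := by rw [← h, ← map_star, ← map_mul, ← map_mul, hx]
  have hTx : T x = T u * T y * star (T u) := by rw [← map_star, ← map_mul, ← map_mul, hx]
  have norm_Su : ‖S u‖ ≤ 1 := norm_map_le_one_of_mul_star_eq_one S hu
  have norm_Tu : ‖T u‖ ≤ 1 := norm_map_le_one_of_mul_star_eq_one T hu
  have norm_Ty : ‖T y‖ ≤ ‖T x‖ := by
    rw [hy, map_mul, map_mul, map_star]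
    exact norm_star_mul_mul_le_of_norm_le_one norm_Tu _
  calc ‖S x - T x‖ = ‖S u * T y * star (S u) - T u * T y * star (T u)‖ := by rw [← hSx, ← hTx]
    _ ≤ (‖S u‖ + ‖T u‖) * ‖S u - T u‖ * ‖T y‖ := norm_mul_mul_star_sub_le _ _ _
    _ ≤ 2 * ‖S u - T u‖ * ‖T x‖ := by
        gcongr
        linarith

end CStarRing

theorem stmt17 {B : Type*} [NormedRing B] [StarRing B] [CStarRing B]
    [NormedAlgebra ℂ B] [StarModule ℂ B] [CompleteSpace B]
    (T : B →⋆ₐ[ℂ] B) (U x : B)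
    (hU : U ∈ unitary B)
    (h : T (star U * x * U) = star U * x * U) :
    ‖T x - x‖ ≤ 2 * ‖T U - U‖ * ‖x‖ :=
  stmt17_general T (StarAlgHom.id ℂ B) (Unitary.mul_star_self_of_mem hU) h
end
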